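/- Let phi0 be a real number with 1/4 < phi0 < 4 and phi0 ≠ 1. Then there exists at most one solution (y1, y2) of the Berger boundary value problem with exp(y2(0)) = phi0: any two solutions (y11, y12) and (y21, y22) with exp(y12(0)) = exp(y22(0)) = phi0 coincide on [0,1]. -/

import Mathlib

open Real Set

/-- Equation (E1) of the Berger Einstein ODE system:
`y1'' + (1/6)(y1')² + (1/3)(y2')² − x⁻¹(1+3x²)(1−x²)⁻¹ y1' = 0`. -/
noncomputable def BergerE1 (y1 y2 : ℝ → ℝ) (x : ℝ) : ℝ :=
  deriv (deriv y1) x + (1/6) * (deriv y1 x)^2 + (1/3) * (deriv y2 x)^2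
    - x⁻¹ * (1 + 3*x^2) * (1 - x^2)⁻¹ * deriv y1 x

/-- Equation (E2) of the Berger Einstein ODE system, with `K = exp ∘ y1`, `phi = exp ∘ y2`:
`y1'' + (1/2)(y1')² − x⁻¹(5+7x²)(1−x²)⁻¹ y1'
  + 8(1−x²)⁻²(6 − 8 K^{-1/3} phi^{-1/3} + 2 K^{-1/3} phi^{-4/3}) = 0`. -/
noncomputable def BergerE2 (y1 y2 : ℝ → ℝ) (x : ℝ) : ℝ :=
  deriv (deriv y1) x + (1/2) * (deriv y1 x)^2
    - x⁻¹ * (5 + 7*x^2) * (1 - x^2)⁻¹ * deriv y1 x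
    + 8 * ((1 - x^2)⁻¹)^2 *
      (6 - 8 * Real.exp (y1 x) ^ (-(1:ℝ)/3) * Real.exp (y2 x) ^ (-(1:ℝ)/3)
         + 2 * Real.exp (y1 x) ^ (-(1:ℝ)/3) * Real.exp (y2 x) ^ (-(4:ℝ)/3))

/-- Equation (E3) of the Berger Einstein ODE system, with `K = exp ∘ y1`, `phi = exp ∘ y2`:
`y2'' + (1/2) y1' y2' − 2x⁻¹(1+2x²)(1−x²)⁻¹ y2'
  + 32(1−x²)⁻² K^{-1/3} phi^{-1/3}(phi⁻¹ − 1) = 0`. -/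
noncomputable def BergerE3 (y1 y2 : ℝ → ℝ) (x : ℝ) : ℝ :=
  deriv (deriv y2) x + (1/2) * deriv y1 x * deriv y2 x
    - 2 * x⁻¹ * (1 + 2*x^2) * (1 - x^2)⁻¹ * deriv y2 x
    + 32 * ((1 - x^2)⁻¹)^2 * Real.exp (y1 x) ^ (-(1:ℝ)/3) * Real.exp (y2 x) ^ (-(1:ℝ)/3)
      * ((Real.exp (y2 x))⁻¹ - 1)

/-- A solution of the Berger boundary value problem: a pair `(y1, y2)` smooth on `[0,1]`
(realized as globally smooth functions), real analytic on `(0,1]`, satisfying (E1)–(E3)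
on `(0,1)`, with boundary conditions `K(1) = phi(1) = 1` (where `K = exp ∘ y1`,
`phi = exp ∘ y2`) and `y1'(0) = y2'(0) = y1'(1) = y2'(1) = 0`. -/
structure BergerBVPSolution (y1 y2 : ℝ → ℝ) : Prop where
  smooth1 : ContDiff ℝ (⊤ : ℕ∞) y1
  smooth2 : ContDiff ℝ (⊤ : ℕ∞) y2
  analytic1 : AnalyticOnNhd ℝ y1 (Ioc 0 1)
  analytic2 : AnalyticOnNhd ℝ y2 (Ioc 0 1)
  eqE1 : ∀ x ∈ Ioo (0:ℝ) 1, BergerE1 y1 y2 x = 0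
  eqE2 : ∀ x ∈ Ioo (0:ℝ) 1, BergerE2 y1 y2 x = 0
  eqE3 : ∀ x ∈ Ioo (0:ℝ) 1, BergerE3 y1 y2 x = 0
  bdryK : Real.exp (y1 1) = 1
  bdryPhi : Real.exp (y2 1) = 1
  der1_0 : deriv y1 0 = 0
  der2_0 : deriv y2 0 = 0
  der1_1 : deriv y1 1 = 0
  der2_1 : deriv y2 1 = 0

/-!
After the substitution `x = exp (-t)` the unknowns are the radius `L` of the horizontal part of the
metric and `v = 1 / φ`. Eliminating `y1''` and `y2''` leaves a first-order constraint, and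
`α = 2 L' / L` satisfies `α² = 4 v (φ(0) + 1 / L²)`, a first integral whose constant is read off at
`x = 0`. Together they say that, as a function of `L`, `v` solves a first-order *linear* equation
whose homogeneous solutions are multiples of `√(L² + 1 / φ(0)) / L⁴`. These are singular at
`L = 0`, so `v` is the regular solution and depends only on `φ(0)` and `L`. The first integral then
turns into an autonomous equation for `L`, and separation of variables together with `L = 0` at
`x = 1` determines `L`, hence `v`, hence `y1` and `y2`.
-/

section RealAnalysis

variable {a b : ℝ}

lemma eq_of_hasDerivAt_eq_zero_of_le {E : Type*} [NormedAddCommGroup E] [NormedSpace ℝ E]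
    {f : ℝ → E} (hab : a ≤ b) (hf : ContinuousOn f (Icc a b))
    (hf' : ∀ x ∈ Ioo a b, HasDerivAt f 0 x) : f a = f b := by
  rcases hab.eq_or_lt with rfl | hlt
  · rfl
  obtain ⟨m, hm⟩ := nonempty_Ioo.2 hlt
  have hIoo : EqOn f (fun _ => f m) (Ioo a b) := fun x hx =>
    isOpen_Ioo.is_const_of_deriv_eq_zero isPreconnected_Ioo
      (fun y hy => (hf' y hy).differentiableAt.differentiableWithinAt)
      (fun y hy => (hf' y hy).deriv) hx hm
  have hIcc : EqOn f (fun _ => f m) (Icc a b) :=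
    hIoo.of_subset_closure hf continuousOn_const Ioo_subset_Icc_self (closure_Ioo hlt.ne).ge
  exact (hIcc (left_mem_Icc.2 hab)).trans (hIcc (right_mem_Icc.2 hab)).symm

lemma injective_of_hasDerivAt_ne_zero {f f' : ℝ → ℝ} (hf : ∀ x, HasDerivAt f (f' x) x)
    (hf' : ∀ x, f' x ≠ 0) : Function.Injective f := by
  refine Function.Injective.of_lt_imp_ne fun x y hxy heq => ?_
  obtain ⟨c, -, hc⟩ := exists_hasDerivAt_eq_zero hxy
    (fun z _ => (hf z).continuousAt.continuousWithinAt) heq fun z _ => hf z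
  exact hf' c hc

lemma eqOn_Ioc_of_separable_ode {F c f g : ℝ → ℝ} (hF : Continuous F) (hF0 : ∀ s, F s ≠ 0)
    (hf : ContinuousOn f (Ioc a b)) (hg : ContinuousOn g (Ioc a b))
    (hf' : ∀ x ∈ Ioo a b, HasDerivAt f (c x * F (f x)) x)
    (hg' : ∀ x ∈ Ioo a b, HasDerivAt g (c x * F (g x)) x) (hfg : f b = g b) :
    EqOn f g (Ioc a b) := by
  intro x hx
  set G : ℝ → ℝ := fun t => ∫ s in (0 : ℝ)..t, (F s)⁻¹
  have hG : ∀ t, HasDerivAt G (F t)⁻¹ t :=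
    fun t => ((hF.inv₀ hF0).integral_hasStrictDerivAt 0 t).hasDerivAt
  have hG_cont : Continuous G := continuous_iff_continuousAt.2 fun t => (hG t).continuousAt
  have hsub : Icc x b ⊆ Ioc a b := Icc_subset_Ioc_left hx.1
  have hconst : G (f x) - G (g x) = G (f b) - G (g b) := by
    refine eq_of_hasDerivAt_eq_zero_of_le (f := fun y => G (f y) - G (g y)) hx.2
      ((hG_cont.comp_continuousOn (hf.mono hsub)).sub (hG_cont.comp_continuousOn (hg.mono hsub)))
      fun y hy => ?_
    have hy' : y ∈ Ioo a b := ⟨hx.1.trans hy.1, hy.2⟩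
    refine (((hG _).comp y (hf' y hy')).sub ((hG _).comp y (hg' y hy'))).congr_deriv ?_
    field_simp [hF0 (f y), hF0 (g y)]
    ring
  rw [hfg, sub_self, sub_eq_zero] at hconst
  exact injective_of_hasDerivAt_ne_zero hG (fun t => inv_ne_zero (hF0 t)) hconst

end RealAnalysis

/-- The right-hand side of the linear differential equation `dv/dl = bergerSlope u l v` satisfied by
`v = 1 / φ` as a function of the radius `l`, where `u = 1 / φ(0)`. -/
noncomputable def bergerSlope (u l v : ℝ) : ℝ :=
  (u * (3 * l ^ 2 + 4) - (3 * l ^ 2 + 4 * u) * v) / (l * (l ^ 2 + u))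

/-- The solution of `dv/dl = bergerSlope u l v` that is regular at `l = 0`: the value of `1 / φ` at
radius `l`, where `u = 1 / φ(0)`. -/
noncomputable def bergerProfile (u l : ℝ) : ℝ :=
  u * (1 + 4 * (1 - u) / (√(l ^ 2 + u) + √u) ^ 2)

/-- The speed `-x dL/dx` at which a solution passes through the radius `L = l`, where
`u = 1 / φ(0)`. -/
noncomputable def bergerSpeed (u l : ℝ) : ℝ :=
  √(bergerProfile u l * (l ^ 2 / u + 1))

section Profile

variable {u : ℝ}

lemma hasDerivAt_sqrt_sq_add (hu : 0 < u) (l : ℝ) :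
    HasDerivAt (fun s => √(s ^ 2 + u)) (l / √(l ^ 2 + u)) l := by
  refine (((hasDerivAt_pow 2 l).add_const u).sqrt (by positivity)).congr_deriv ?_
  field_simp
  norm_num

lemma bergerProfile_pos (hu : 0 < u) (l : ℝ) : 0 < bergerProfile u l := by
  have hsqrt : √u ≤ √(l ^ 2 + u) := Real.sqrt_le_sqrt (by linarith [sq_nonneg l])
  have hsum : 4 * u ≤ (√(l ^ 2 + u) + √u) ^ 2 := by
    calc 4 * u = (√u + √u) ^ 2 := by linear_combination -4 * Real.sq_sqrt hu.le
      _ ≤ (√(l ^ 2 + u) + √u) ^ 2 := by gcongr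
  have hnum : 0 < (√(l ^ 2 + u) + √u) ^ 2 + 4 * (1 - u) := by linarith
  rw [bergerProfile, one_add_div (by positivity)]
  positivity

lemma continuous_bergerProfile (hu : 0 < u) : Continuous (bergerProfile u) := by
  unfold bergerProfile
  fun_prop (disch := intros; positivity)

lemma hasDerivAt_bergerProfile (hu : 0 < u) {l : ℝ} (hl : l ≠ 0) :
    HasDerivAt (bergerProfile u) (bergerSlope u l (bergerProfile u l)) l := by
  have hR : 0 < √(l ^ 2 + u) := by positivity
  have hN : 0 < √u := Real.sqrt_pos.2 hu
  have hR_sq : √(l ^ 2 + u) ^ 2 = l ^ 2 + u := Real.sq_sqrt (by positivity)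
  have hN_sq : √u ^ 2 = u := Real.sq_sqrt hu.le
  refine (((((hasDerivAt_sqrt_sq_add hu l).add_const (√u)).fun_pow 2).fun_inv
    (by positivity)).const_mul (4 * (1 - u)) |>.const_add 1 |>.const_mul u).congr_deriv ?_
  unfold bergerSlope bergerProfile
  generalize √(l ^ 2 + u) = R at *
  generalize √u = N at *
  rw [← hR_sq]
  obtain rfl : u = N ^ 2 := hN_sq.symm
  have hl_sq : l ^ 2 = R ^ 2 - N ^ 2 := by linarith
  field_simp
  rw [hl_sq]
  ring

lemma bergerSpeed_pos (hu : 0 < u) (l : ℝ) : 0 < bergerSpeed u l :=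
  Real.sqrt_pos.2 (mul_pos (bergerProfile_pos hu l) (by positivity))

lemma continuous_bergerSpeed (hu : 0 < u) : Continuous (bergerSpeed u) := by
  have hp := continuous_bergerProfile hu
  unfold bergerSpeed
  fun_prop

/-- This is the integrating factor of the linear equation `dv/dl = bergerSlope u l v`. -/
lemma hasDerivAt_pow_four_div_sqrt (hu : 0 < u) {l : ℝ} (hl : l ≠ 0) :
    HasDerivAt (fun s => s ^ 4 / √(s ^ 2 + u))
      ((3 * l ^ 2 + 4 * u) / (l * (l ^ 2 + u)) * (l ^ 4 / √(l ^ 2 + u))) l := by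
  have hR_sq : √(l ^ 2 + u) ^ 2 = l ^ 2 + u := Real.sq_sqrt (by positivity)
  refine ((hasDerivAt_pow 4 l).div (hasDerivAt_sqrt_sq_add hu l) (by positivity)).congr_deriv ?_
  have hR : 0 < √(l ^ 2 + u) := by positivity
  generalize √(l ^ 2 + u) = R at *
  rw [← hR_sq]
  field_simp
  linear_combination 4 * l ^ 3 * hR_sq

end Profile

lemma one_sub_sq_pos {x : ℝ} (hx : x ∈ Ico (0 : ℝ) 1) : 0 < 1 - x ^ 2 :=
  sub_pos.2 (pow_lt_one₀ hx.1 hx.2 two_ne_zero)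

/-- The radius of the horizontal part of the metric attached to `(y1, y2)`. It vanishes at `x = 1`
and blows up at `x = 0`, where Lean's division gives it the value `0`. -/
noncomputable def bergerRadius (y1 y2 : ℝ → ℝ) (x : ℝ) : ℝ :=
  (1 - x ^ 2) / (2 * x) * Real.exp ((y1 x + y2 x) / 6)

/-- The logarithmic derivative of `bergerRadius y1 y2 ^ 2` with respect to `-log x`, extended
continuously to `x = 0`; this is the `α` of the introduction. -/
noncomputable def bergerRate (y1 y2 : ℝ → ℝ) (x : ℝ) : ℝ :=
  2 * (1 + x ^ 2) / (1 - x ^ 2) - x * (deriv y1 x + deriv y2 x) / 3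

section Radius

variable {y1 y2 : ℝ → ℝ} {x : ℝ}

@[simp]
lemma bergerRadius_one : bergerRadius y1 y2 1 = 0 := by simp [bergerRadius]

@[simp]
lemma bergerRate_zero : bergerRate y1 y2 0 = 2 := by simp [bergerRate]

lemma bergerRadius_pos (y1 y2 : ℝ → ℝ) (hx : x ∈ Ioo (0 : ℝ) 1) : 0 < bergerRadius y1 y2 x := by
  have hx0 : 0 < x := hx.1
  have hx1 := one_sub_sq_pos (Ioo_subset_Ico_self hx)
  unfold bergerRadius
  positivity

/-- At `x = 0` both sides are `0`, on the left because `0⁻¹ = 0`; this is the true limit. -/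
lemma inv_sq_bergerRadius (y1 y2 : ℝ → ℝ) (x : ℝ) :
    (bergerRadius y1 y2 x ^ 2)⁻¹
      = 4 * x ^ 2 / (1 - x ^ 2) ^ 2 * Real.exp (-(y1 x + y2 x) / 3) := by
  have hexp : (Real.exp ((y1 x + y2 x) / 6) ^ 2)⁻¹ = Real.exp (-(y1 x + y2 x) / 3) := by
    rw [← Real.exp_nat_mul, ← Real.exp_neg]
    ring_nf
  rw [bergerRadius, mul_pow, mul_inv, hexp, div_pow, inv_div, mul_pow]
  norm_num

lemma continuousOn_bergerRadius (h1 : Continuous y1) (h2 : Continuous y2) :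
    ContinuousOn (bergerRadius y1 y2) {0}ᶜ := by
  unfold bergerRadius
  refine ContinuousOn.mul (ContinuousOn.div (by fun_prop) (by fun_prop) fun x hx => ?_)
    (by fun_prop)
  exact mul_ne_zero two_ne_zero hx

lemma continuousOn_inv_sq_bergerRadius (h1 : Continuous y1) (h2 : Continuous y2) :
    ContinuousOn (fun x => (bergerRadius y1 y2 x ^ 2)⁻¹) (Ico 0 1) := by
  simp only [inv_sq_bergerRadius]
  refine ContinuousOn.mul (ContinuousOn.div (by fun_prop) (by fun_prop) fun x hx => ?_)
    (by fun_prop)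
  have hx1 := one_sub_sq_pos hx
  positivity

lemma continuousOn_bergerRate (h1 : Continuous (deriv y1)) (h2 : Continuous (deriv y2)) :
    ContinuousOn (bergerRate y1 y2) (Ico 0 1) := by
  unfold bergerRate
  refine ContinuousOn.sub (ContinuousOn.div (by fun_prop) (by fun_prop) fun x hx => ?_)
    (by fun_prop)
  exact (one_sub_sq_pos hx).ne'

lemma hasDerivAt_bergerRadius (h1 : DifferentiableAt ℝ y1 x) (h2 : DifferentiableAt ℝ y2 x)
    (hx0 : x ≠ 0) (hx1 : 1 - x ^ 2 ≠ 0) :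
    HasDerivAt (bergerRadius y1 y2) (-(bergerRate y1 y2 x * bergerRadius y1 y2 x / 2) / x) x := by
  have hd := (((hasDerivAt_pow 2 x).const_sub 1).div ((hasDerivAt_id' x).const_mul 2)
    (by simpa using hx0)).mul ((h1.hasDerivAt.add h2.hasDerivAt).div_const 6).exp
  refine hd.congr_deriv ?_
  unfold bergerRate bergerRadius
  simp only [Pi.add_apply, Pi.div_apply]
  field_simp
  ring

end Radius

/-- A classical solution of the system (E1)–(E3), of class `C²` up to the endpoints, with no
boundary conditions imposed. As in `BergerBVPSolution`, regularity on `[0,1]` is realized by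
functions on the whole line. -/
structure BergerSystemSolution (y1 y2 : ℝ → ℝ) : Prop where
  contDiff_fst : ContDiff ℝ 2 y1
  contDiff_snd : ContDiff ℝ 2 y2
  eqE1 : ∀ x ∈ Ioo (0 : ℝ) 1, BergerE1 y1 y2 x = 0
  eqE2 : ∀ x ∈ Ioo (0 : ℝ) 1, BergerE2 y1 y2 x = 0
  eqE3 : ∀ x ∈ Ioo (0 : ℝ) 1, BergerE3 y1 y2 x = 0

lemma BergerBVPSolution.bergerSystemSolution {y1 y2 : ℝ → ℝ} (h : BergerBVPSolution y1 y2) :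
    BergerSystemSolution y1 y2 where
  contDiff_fst := contDiff_infty.1 h.smooth1 2
  contDiff_snd := contDiff_infty.1 h.smooth2 2
  eqE1 := h.eqE1
  eqE2 := h.eqE2
  eqE3 := h.eqE3

lemma exp_rpow_mul_exp_rpow (a b s t : ℝ) :
    Real.exp a ^ s * Real.exp b ^ t = Real.exp (a * s + b * t) := by
  rw [← Real.exp_mul, ← Real.exp_mul, ← Real.exp_add]

lemma exp_rpow_neg_third_mul (a b : ℝ) :
    Real.exp a ^ (-(1 : ℝ) / 3) * Real.exp b ^ (-(1 : ℝ) / 3) = Real.exp (-(a + b) / 3) := by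
  rw [exp_rpow_mul_exp_rpow]
  ring_nf

namespace BergerSystemSolution

variable {y1 y2 : ℝ → ℝ} {x : ℝ}

lemma differentiable_fst (h : BergerSystemSolution y1 y2) : Differentiable ℝ y1 :=
  h.contDiff_fst.differentiable two_ne_zero

lemma differentiable_snd (h : BergerSystemSolution y1 y2) : Differentiable ℝ y2 :=
  h.contDiff_snd.differentiable two_ne_zero

lemma eqE2_radius (h : BergerSystemSolution y1 y2) (hx : x ∈ Ioo (0 : ℝ) 1) :
    x ^ 2 * (deriv (deriv y1) x + deriv y1 x ^ 2 / 2)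
      - x * (5 + 7 * x ^ 2) / (1 - x ^ 2) * deriv y1 x + 48 * x ^ 2 / (1 - x ^ 2) ^ 2
      - (16 - 4 * Real.exp (-y2 x)) * (bergerRadius y1 y2 x ^ 2)⁻¹ = 0 := by
  have hE := h.eqE2 x hx
  have hx0 : x ≠ 0 := hx.1.ne'
  have hx1 : 1 - x ^ 2 ≠ 0 := (one_sub_sq_pos (Ioo_subset_Ico_self hx)).ne'
  have h43 : Real.exp (y1 x) ^ (-(1 : ℝ) / 3) * Real.exp (y2 x) ^ (-(4 : ℝ) / 3)
      = Real.exp (-y2 x) * Real.exp (-(y1 x + y2 x) / 3) := by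
    rw [exp_rpow_mul_exp_rpow, ← Real.exp_add]
    ring_nf
  rw [BergerE2, mul_assoc 8 (_ ^ (_ : ℝ)), mul_assoc 2 (_ ^ (_ : ℝ)),
    exp_rpow_neg_third_mul, h43] at hE
  rw [inv_sq_bergerRadius]
  linear_combination (norm := (field_simp; ring)) x ^ 2 * hE

lemma eqE3_radius (h : BergerSystemSolution y1 y2) (hx : x ∈ Ioo (0 : ℝ) 1) :
    x ^ 2 * (deriv (deriv y2) x + deriv y1 x * deriv y2 x / 2)
      - 2 * x * (1 + 2 * x ^ 2) / (1 - x ^ 2) * deriv y2 x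
      + 8 * (Real.exp (-y2 x) - 1) * (bergerRadius y1 y2 x ^ 2)⁻¹ = 0 := by
  have hE := h.eqE3 x hx
  have hx0 : x ≠ 0 := hx.1.ne'
  have hx1 : 1 - x ^ 2 ≠ 0 := (one_sub_sq_pos (Ioo_subset_Ico_self hx)).ne'
  rw [BergerE3, mul_assoc (32 * _), exp_rpow_neg_third_mul, ← Real.exp_neg] at hE
  rw [inv_sq_bergerRadius]
  linear_combination (norm := (field_simp; ring)) x ^ 2 * hE

lemma hamiltonian_constraint (h : BergerSystemSolution y1 y2) (hx : x ∈ Ioo (0 : ℝ) 1) :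
    3 * bergerRate y1 y2 x ^ 2 + 2 * bergerRate y1 y2 x * (x * deriv y2 x)
      = 12 + (16 - 4 * Real.exp (-y2 x)) * (bergerRadius y1 y2 x ^ 2)⁻¹ := by
  have hE1 := h.eqE1 x hx
  have hE2 := h.eqE2_radius hx
  have hx0 : x ≠ 0 := hx.1.ne'
  have hx1 : 1 - x ^ 2 ≠ 0 := (one_sub_sq_pos (Ioo_subset_Ico_self hx)).ne'
  rw [BergerE1] at hE1
  rw [bergerRate]
  linear_combination (norm := (field_simp; ring)) hE2 - x ^ 2 * hE1

lemma hasDerivAt_bergerRate (h : BergerSystemSolution y1 y2) (hx : x ∈ Ioo (0 : ℝ) 1) :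
    HasDerivAt (bergerRate y1 y2)
      ((2 * Real.exp (-y2 x) * (bergerRadius y1 y2 x ^ 2)⁻¹
        - bergerRate y1 y2 x * (x * deriv y2 x) / 2) / x) x := by
  have hx0 : x ≠ 0 := hx.1.ne'
  have hx1 : 1 - x ^ 2 ≠ 0 := (one_sub_sq_pos (Ioo_subset_Ico_self hx)).ne'
  have hy1 := (h.contDiff_fst.differentiable_deriv_two x).hasDerivAt
  have hy2 := (h.contDiff_snd.differentiable_deriv_two x).hasDerivAt
  have hsq := hasDerivAt_pow 2 x
  refine ((((hsq.const_add 1).const_mul 2).div (hsq.const_sub 1) hx1).sub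
    (((hasDerivAt_id' x).mul (hy1.add hy2)).div_const 3)).congr_deriv ?_
  have hE1 := h.eqE1 x hx
  have hE2 := h.eqE2_radius hx
  have hE3 := h.eqE3_radius hx
  rw [BergerE1] at hE1
  simp only [bergerRate, Pi.add_apply]
  generalize (bergerRadius y1 y2 x ^ 2)⁻¹ = S at *
  linear_combination (norm := (field_simp; ring))
    -(x / 2) * hE1 + 1 / (6 * x) * hE2 - 1 / (3 * x) * hE3

lemma hasDerivAt_radius (h : BergerSystemSolution y1 y2) (hx : x ∈ Ioo (0 : ℝ) 1) :
    HasDerivAt (bergerRadius y1 y2) (-(bergerRate y1 y2 x * bergerRadius y1 y2 x / 2) / x) x :=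
  hasDerivAt_bergerRadius (h.differentiable_fst x) (h.differentiable_snd x) hx.1.ne'
    (one_sub_sq_pos (Ioo_subset_Ico_self hx)).ne'

lemma continuousOn_radius (h : BergerSystemSolution y1 y2) :
    ContinuousOn (bergerRadius y1 y2) (Ioc 0 1) :=
  (continuousOn_bergerRadius h.contDiff_fst.continuous h.contDiff_snd.continuous).mono
    fun _ hx => hx.1.ne'

lemma continuousOn_rate (h : BergerSystemSolution y1 y2) :
    ContinuousOn (bergerRate y1 y2) (Ico 0 1) :=
  continuousOn_bergerRate (h.contDiff_fst.continuous_deriv one_le_two)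
    (h.contDiff_snd.continuous_deriv one_le_two)

lemma first_integral (h : BergerSystemSolution y1 y2) (hx : x ∈ Ico (0 : ℝ) 1) :
    bergerRate y1 y2 x ^ 2 * Real.exp (y2 x) / 4 - (bergerRadius y1 y2 x ^ 2)⁻¹
      = Real.exp (y2 0) := by
  have hsub : Icc 0 x ⊆ Ico (0 : ℝ) 1 := Icc_subset_Ico_right hx.2
  have hconst := eq_of_hasDerivAt_eq_zero_of_le (f := fun y =>
    bergerRate y1 y2 y ^ 2 * Real.exp (y2 y) / 4 - (bergerRadius y1 y2 y ^ 2)⁻¹) hx.1 ?_ ?_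
  · rw [← hconst]
    norm_num [bergerRadius]
  · have hα := h.continuousOn_rate.mono hsub
    have hS := (continuousOn_inv_sq_bergerRadius h.contDiff_fst.continuous
      h.contDiff_snd.continuous).mono hsub
    have hy2 := h.contDiff_snd.continuous
    fun_prop
  · intro y hy
    have hy' : y ∈ Ioo (0 : ℝ) 1 := ⟨hy.1, hy.2.trans hx.2⟩
    have hy0 : y ≠ 0 := hy'.1.ne'
    have hL : bergerRadius y1 y2 y ≠ 0 := (bergerRadius_pos y1 y2 hy').ne'
    refine ((((h.hasDerivAt_bergerRate hy').fun_pow 2).mul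
      (h.differentiable_snd y).hasDerivAt.exp).div_const 4 |>.sub
      (((h.hasDerivAt_radius hy').fun_pow 2).fun_inv (pow_ne_zero 2 hL))).congr_deriv ?_
    rw [Real.exp_neg]
    field_simp
    ring

lemma sq_bergerRate (h : BergerSystemSolution y1 y2) (hx : x ∈ Ico (0 : ℝ) 1) :
    bergerRate y1 y2 x ^ 2
      = 4 * Real.exp (-y2 x) * (Real.exp (y2 0) + (bergerRadius y1 y2 x ^ 2)⁻¹) := by
  rw [← h.first_integral hx, Real.exp_neg]
  field_simp
  ring

lemma bergerRate_pos (h : BergerSystemSolution y1 y2) (hx : x ∈ Ico (0 : ℝ) 1) :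
    0 < bergerRate y1 y2 x := by
  have hne : ∀ z ∈ Ico (0 : ℝ) 1, bergerRate y1 y2 z ≠ 0 := fun z hz => by
    rw [← pow_ne_zero_iff two_ne_zero, h.sq_bergerRate hz]
    positivity
  by_contra! hneg
  obtain ⟨z, hz, hz0⟩ := isPreconnected_Ico.intermediate_value hx
    (left_mem_Ico.2 zero_lt_one) h.continuousOn_rate
    (show (0 : ℝ) ∈ Icc (bergerRate y1 y2 x) (bergerRate y1 y2 0) from ⟨hneg, by simp⟩)
  exact hne z hz hz0

/-- This is `dv/dL = bergerSlope u L v` for `v = 1 / φ`, written in the variable `x`. -/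
lemma hasDerivAt_exp_neg_snd (h : BergerSystemSolution y1 y2) (hx : x ∈ Ioo (0 : ℝ) 1) :
    HasDerivAt (fun y => Real.exp (-y2 y))
      (bergerSlope (Real.exp (-y2 0)) (bergerRadius y1 y2 x) (Real.exp (-y2 x))
        * (-(bergerRate y1 y2 x * bergerRadius y1 y2 x / 2) / x)) x := by
  refine (h.differentiable_snd x).hasDerivAt.neg.exp.congr_deriv ?_
  have hx0 : x ≠ 0 := hx.1.ne'
  have hL : bergerRadius y1 y2 x ≠ 0 := (bergerRadius_pos y1 y2 hx).ne'
  have hα : bergerRate y1 y2 x ≠ 0 := (h.bergerRate_pos (Ioo_subset_Ico_self hx)).ne'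
  have hc := h.hamiltonian_constraint hx
  have hs := h.sq_bergerRate (Ioo_subset_Ico_self hx)
  have hu : 0 < Real.exp (-y2 0) := Real.exp_pos _
  rw [← neg_neg (y2 0), Real.exp_neg (-y2 0)] at hs
  rw [bergerSlope]
  simp only [Pi.neg_apply]
  generalize Real.exp (-y2 0) = u at *
  generalize bergerRadius y1 y2 x = L at *
  generalize bergerRate y1 y2 x = α at *
  generalize Real.exp (-y2 x) = v at *
  generalize deriv y2 x = b at *
  have hR : L ^ 2 + u ≠ 0 := by positivity
  have hkey : α * (2 * x * b * v * (L ^ 2 + u))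
      = α * (α * (u * (3 * L ^ 2 + 4) - (3 * L ^ 2 + 4 * u) * v)) := by
    linear_combination (norm := (field_simp; ring)) v * (L ^ 2 + u) * hc
      - (3 * v * (L ^ 2 + u) + (u * (3 * L ^ 2 + 4) - (3 * L ^ 2 + 4 * u) * v)) * hs
  field_simp
  linear_combination -mul_left_cancel₀ hα hkey

/-- The difference of two solutions of a linear equation, multiplied by the integrating factor, is
constant; here the constant is `0` because the factor vanishes at `L = 0`. -/
lemma exp_neg_snd_eq_bergerProfile (h : BergerSystemSolution y1 y2) (hx : x ∈ Ioo (0 : ℝ) 1) :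
    Real.exp (-y2 x) = bergerProfile (Real.exp (-y2 0)) (bergerRadius y1 y2 x) := by
  have hu : 0 < Real.exp (-y2 0) := Real.exp_pos _
  have hL := bergerRadius_pos y1 y2 hx
  set u := Real.exp (-y2 0)
  set M : ℝ → ℝ := fun s => s ^ 4 / √(s ^ 2 + u) with hM
  have hconst := eq_of_hasDerivAt_eq_zero_of_le (f := fun y =>
    (Real.exp (-y2 y) - bergerProfile u (bergerRadius y1 y2 y)) * M (bergerRadius y1 y2 y))
    hx.2.le ?_ ?_
  · have hR : 0 < √(bergerRadius y1 y2 x ^ 2 + u) := by positivity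
    simpa [hM, hL.ne', hR.ne', sub_eq_zero] using hconst
  · have hcont := h.continuousOn_radius.mono (Icc_subset_Ioc_left hx.1)
    have hy2 := h.contDiff_snd.continuous
    have hp := continuous_bergerProfile hu
    have hMc : Continuous M := by
      unfold M
      fun_prop (disch := intros; positivity)
    fun_prop
  · intro y hy
    have hy' : y ∈ Ioo (0 : ℝ) 1 := ⟨hx.1.trans hy.1, hy.2⟩
    have hLy : bergerRadius y1 y2 y ≠ 0 := (bergerRadius_pos y1 y2 hy').ne'
    have hL' := h.hasDerivAt_radius hy'
    refine (((h.hasDerivAt_exp_neg_snd hy').sub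
      ((hasDerivAt_bergerProfile hu hLy).comp y hL')).mul
      ((hasDerivAt_pow_four_div_sqrt hu hLy).comp y hL')).congr_deriv ?_
    simp only [bergerSlope, Function.comp_apply, Pi.sub_apply]
    ring

lemma hasDerivAt_radius_speed (h : BergerSystemSolution y1 y2) (hx : x ∈ Ioo (0 : ℝ) 1) :
    HasDerivAt (bergerRadius y1 y2)
      (-x⁻¹ * bergerSpeed (Real.exp (-y2 0)) (bergerRadius y1 y2 x)) x := by
  have hL := bergerRadius_pos y1 y2 hx
  have hα := h.bergerRate_pos (Ioo_subset_Ico_self hx)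
  have hspeed : bergerSpeed (Real.exp (-y2 0)) (bergerRadius y1 y2 x)
      = bergerRate y1 y2 x * bergerRadius y1 y2 x / 2 := by
    rw [bergerSpeed, ← h.exp_neg_snd_eq_bergerProfile hx,
      Real.sqrt_eq_iff_mul_self_eq_of_pos (by positivity)]
    have hs := h.sq_bergerRate (Ioo_subset_Ico_self hx)
    rw [Real.exp_neg (y2 0)]
    linear_combination (norm := (field_simp; ring)) bergerRadius y1 y2 x ^ 2 / 4 * hs
  refine (h.hasDerivAt_radius hx).congr_deriv ?_
  rw [hspeed]
  ring

lemma eqOn_bergerRadius {z1 z2 : ℝ → ℝ} (h : BergerSystemSolution y1 y2)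
    (k : BergerSystemSolution z1 z2) (h0 : y2 0 = z2 0) :
    EqOn (bergerRadius y1 y2) (bergerRadius z1 z2) (Ioc 0 1) :=
  eqOn_Ioc_of_separable_ode (continuous_bergerSpeed (Real.exp_pos (-y2 0)))
    (fun s => (bergerSpeed_pos (Real.exp_pos _) s).ne') h.continuousOn_radius
    k.continuousOn_radius (fun _ hx => h.hasDerivAt_radius_speed hx)
    (fun _ hx => h0 ▸ k.hasDerivAt_radius_speed hx) (by simp)

lemma eq_of_mem_Ioo {z1 z2 : ℝ → ℝ} (h : BergerSystemSolution y1 y2)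
    (k : BergerSystemSolution z1 z2) (h0 : y2 0 = z2 0) (hx : x ∈ Ioo (0 : ℝ) 1) :
    y1 x = z1 x ∧ y2 x = z2 x := by
  have hL : bergerRadius y1 y2 x = bergerRadius z1 z2 x :=
    h.eqOn_bergerRadius k h0 (Ioo_subset_Ioc_self hx)
  have h2 : y2 x = z2 x := by
    refine neg_injective (Real.exp_injective ?_)
    rw [h.exp_neg_snd_eq_bergerProfile hx, k.exp_neg_snd_eq_bergerProfile hx, hL, h0]
  have hscale : (1 - x ^ 2) / (2 * x) ≠ 0 :=
    div_ne_zero (one_sub_sq_pos (Ioo_subset_Ico_self hx)).ne' (mul_ne_zero two_ne_zero hx.1.ne')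
  have hsum := Real.exp_injective (mul_left_cancel₀ hscale hL)
  exact ⟨by linarith, h2⟩

end BergerSystemSolution

theorem berger_bvp_uniqueness_general {y11 y12 y21 y22 : ℝ → ℝ}
    (h : BergerSystemSolution y11 y12) (k : BergerSystemSolution y21 y22)
    (h0 : y12 0 = y22 0) : EqOn y11 y21 (Icc 0 1) ∧ EqOn y12 y22 (Icc 0 1) := by
  rw [← closure_Ioo zero_ne_one]
  exact ⟨EqOn.closure (fun _ hx => (h.eq_of_mem_Ioo k h0 hx).1) h.contDiff_fst.continuous
      k.contDiff_fst.continuous,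
    EqOn.closure (fun _ hx => (h.eq_of_mem_Ioo k h0 hx).2) h.contDiff_snd.continuous
      k.contDiff_snd.continuous⟩

/-- uniqueness of the solution to the Berger BVP with prescribed
`phi(0) = phi0`, for `1/4 < phi0 < 4`, `phi0 ≠ 1`. -/
theorem berger_bvp_uniqueness (phi0 : ℝ)
    (hlow : 1/4 < phi0) (hhigh : phi0 < 4) (hne : phi0 ≠ 1)
    (y11 y12 y21 y22 : ℝ → ℝ)
    (hsol1 : BergerBVPSolution y11 y12) (hsol2 : BergerBVPSolution y21 y22)
    (hp1 : Real.exp (y12 0) = phi0) (hp2 : Real.exp (y22 0) = phi0) :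
    ∀ x ∈ Icc (0:ℝ) 1, y11 x = y21 x ∧ y12 x = y22 x :=
  have h := berger_bvp_uniqueness_general hsol1.bergerSystemSolution hsol2.bergerSystemSolution
    (Real.exp_injective (hp1.trans hp2.symm))
  fun _ hx => ⟨h.1 hx, h.2 hx⟩
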